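/- Let D be an LD-derivation for a program P, let Q_j = B⃗,A⃗ be a query occurring in D, and let D_j be the subderivation of D for B⃗ starting at Q_j. Assume that a variable X occurs in Q_0,…,Q_j or in θ_1,…,θ_j or in a clause variant used to derive some of Q_1,…,Q_j, and that X does not occur in B⃗. Then X does not occur in any mgu θ_{j+1}, θ_{j+2}, … of D_j, nor does X occur in the prefix B⃗_i of any query Q_i = B⃗_i, A⃗θ_{j+1}⋯θ_i of D_j (for i > j). -/

import Mathlib

/-! A variable `X` already present in the history of the derivation at `Q_j` never occurs in a later
clause variant, by standardization apart (`histVars_mono` carries the history forward). Hence "`X`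
does not occur in the prefix `B⃗_i`" is an invariant of the subderivation: as long as the prefix is
nonempty, the selected atom belongs to it, so by relevance the mgu only involves variables of the
prefix and of the clause variant, and `X` is not among them; the next prefix is an instance, under
this mgu, of the clause body and the rest of the old prefix, so it also omits `X`
(`DStep.notMem_prefix`). The prefix is encoded as the query without its last `|A⃗|` atoms. -/

/- Formalization of definite clause programs with the cut (Prolog),
   LD-resolution, LD-trees, pruning by the cut, specifications,
   correctness and completeness notions. -/

namespace LP

/-- First-order terms over function symbols `F`; variables are indexed by `ℕ`. -/
inductive Tm (F : Type) : Type
  | var : ℕ → Tm F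
  | fn  : F → List (Tm F) → Tm F

/-- Ordinary (non-cut) atoms over function symbols `F` and predicate symbols `Pr`. -/
structure Atom (F Pr : Type) : Type where
  pred : Pr
  args : List (Tm F)

/-- Extended atoms: ordinary atoms together with the cut `!`. -/
inductive EAtom (F Pr : Type) : Type
  | cut : EAtom F Pr
  | atm : Atom F Pr → EAtom F Pr

/-- A query is a finite sequence of extended atoms. -/
abbrev Query (F Pr : Type) := List (EAtom F Pr)

/-- A definite clause (whose body may contain cuts). -/
structure Clause (F Pr : Type) : Type where
  head : Atom F Pr
  body : Query F Pr

/-- A program (with cuts) is a finite sequence of clauses. -/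
abbrev Prog (F Pr : Type) := List (Clause F Pr)

/-- Substitutions. -/
abbrev Subst (F : Type) := ℕ → Tm F

variable {F Pr : Type}

/-- The empty (identity) substitution. -/
def Subst.idS : Subst F := fun n => Tm.var n

/-- Applying a substitution to a term. -/
def Tm.subst (θ : Subst F) : Tm F → Tm F
  | .var n => θ n
  | .fn f ts => .fn f (ts.attach.map (fun t => Tm.subst θ t.1))
decreasing_by
  have := List.sizeOf_lt_of_mem t.2
  simp only [Tm.fn.sizeOf_spec]
  omega

/-- The list of variables of a term. -/
def Tm.varsL : Tm F → List ℕ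
  | .var n => [n]
  | .fn _ ts => ts.attach.flatMap (fun t => Tm.varsL t.1)
decreasing_by
  have := List.sizeOf_lt_of_mem t.2
  simp only [Tm.fn.sizeOf_spec]
  omega

/-- The set of variables of a term. -/
def Tm.vars (t : Tm F) : Set ℕ := {n | n ∈ t.varsL}

/-- A term is ground if it has no variables. -/
def Tm.Ground (t : Tm F) : Prop := t.vars = ∅

def Atom.subst (θ : Subst F) (A : Atom F Pr) : Atom F Pr :=
  ⟨A.pred, A.args.map (Tm.subst θ)⟩

def Atom.vars (A : Atom F Pr) : Set ℕ := {n | ∃ t ∈ A.args, n ∈ t.vars}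

/-- A ground atom (an element of the Herbrand base `HB` when it moreover holds). -/
def Atom.Ground (A : Atom F Pr) : Prop := A.vars = ∅

def EAtom.subst (θ : Subst F) : EAtom F Pr → EAtom F Pr
  | .cut => .cut
  | .atm A => .atm (Atom.subst θ A)

def EAtom.vars : EAtom F Pr → Set ℕ
  | .cut => ∅
  | .atm A => A.vars

def EAtom.Ground (a : EAtom F Pr) : Prop := a.vars = ∅

def Query.subst (θ : Subst F) (Q : Query F Pr) : Query F Pr := Q.map (EAtom.subst θ)

def Query.vars (Q : Query F Pr) : Set ℕ := {n | ∃ a ∈ Q, n ∈ EAtom.vars a}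

def Query.Ground (Q : Query F Pr) : Prop := Query.vars Q = ∅

def Clause.subst (θ : Subst F) (C : Clause F Pr) : Clause F Pr :=
  ⟨Atom.subst θ C.head, Query.subst θ C.body⟩

def Clause.vars (C : Clause F Pr) : Set ℕ := C.head.vars ∪ Query.vars C.body

def Clause.Ground (C : Clause F Pr) : Prop := C.vars = ∅

/-- The domain of a substitution. -/
def Subst.dom (θ : Subst F) : Set ℕ := {n | θ n ≠ .var n}

/-- The range variables of a substitution. -/
def Subst.rng (θ : Subst F) : Set ℕ := {m | ∃ n, θ n ≠ .var n ∧ m ∈ (θ n).vars}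

/-- All variables of a substitution. -/
def Subst.varSet (θ : Subst F) : Set ℕ := θ.dom ∪ θ.rng

/-- Composition: apply `θ` first, then `σ`. -/
def Subst.comp (θ σ : Subst F) : Subst F := fun n => (θ n).subst σ

/-- A substitution is idempotent when its domain and range are disjoint. -/
def Subst.Idempotent (θ : Subst F) : Prop := Disjoint θ.dom θ.rng

/-- A substitution is ground if it maps every domain variable to a ground term. -/
def Subst.GroundOn (θ : Subst F) : Prop := ∀ n ∈ θ.dom, (θ n).Ground

/-- `compN θ i k` is the composition `θ i ; θ (i+1) ; ⋯ ; θ (i+k-1)`. -/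
def compN (θ : ℕ → Subst F) : ℕ → ℕ → Subst F
  | _, 0 => Subst.idS
  | i, k+1 => Subst.comp (θ i) (compN θ (i+1) k)

/-- `θ` unifies atoms `A` and `B`. -/
def Unifies (θ : Subst F) (A B : Atom F Pr) : Prop := Atom.subst θ A = Atom.subst θ B

/-- `θ` is a most general unifier of `A` and `B`. -/
def IsMgu (θ : Subst F) (A B : Atom F Pr) : Prop :=
  Unifies θ A B ∧ ∀ σ : Subst F, Unifies σ A B → ∃ δ : Subst F, ∀ n, σ n = (θ n).subst δ

/-- A unifier is relevant if all its variables occur in the unified atoms. -/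
def Relevant (θ : Subst F) (A B : Atom F Pr) : Prop := θ.varSet ⊆ A.vars ∪ B.vars

/-- `B` is an instance of `A`. -/
def Atom.Inst (B A : Atom F Pr) : Prop := ∃ θ : Subst F, B = Atom.subst θ A

/-- `Q'` is an instance of `Q`. -/
def Query.Inst (Q' Q : Query F Pr) : Prop := ∃ θ : Subst F, Q' = Query.subst θ Q

/-- `C'` is an instance of `C`. -/
def Clause.Inst (C' C : Clause F Pr) : Prop := ∃ θ : Subst F, C' = Clause.subst θ C

/-- `C` and `C'` are variants of each other. -/
def Variant (C C' : Clause F Pr) : Prop := Clause.Inst C C' ∧ Clause.Inst C' C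

/-! ### Specifications -/

/-- Membership of an extended atom in `S ∪ {!}`. -/
def EAtomIn (S : Set (Atom F Pr)) : EAtom F Pr → Prop
  | .cut => True
  | .atm A => A ∈ S

/-- `S ⊨ Q`: every atom of `Q` is in `S ∪ {!}`. -/
def SpecModels (S : Set (Atom F Pr)) (Q : Query F Pr) : Prop := ∀ a ∈ Q, EAtomIn S a

/-- A set of atoms is closed under substitution. -/
def SubstClosed (S : Set (Atom F Pr)) : Prop := ∀ A ∈ S, ∀ θ : Subst F, Atom.subst θ A ∈ S

/-- The restriction of a set of atoms to ground atoms (to `HB`). -/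
def HBRestrict (S : Set (Atom F Pr)) : Set (Atom F Pr) := {A ∈ S | A.Ground}

/-- A ground atom `A` is covered by clause `C` w.r.t. `S`:
`A` is the head of a ground instance of `C` whose body atoms are in `S ∪ {!}`. -/
def CoveredBy (S : Set (Atom F Pr)) (C : Clause F Pr) (A : Atom F Pr) : Prop :=
  ∃ θ : Subst F, Clause.Ground (Clause.subst θ C) ∧ Atom.subst θ C.head = A ∧
    SpecModels S (Query.subst θ C.body)

/-- The least Herbrand model of `P` (the cut is treated as true). -/
inductive MP (P : Prog F Pr) : Atom F Pr → Prop where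
  | step : ∀ C ∈ P, ∀ θ : Subst F, Clause.Ground (Clause.subst θ C) →
      (∀ A : Atom F Pr, EAtom.atm A ∈ Query.subst θ C.body → MP P A) →
      MP P (Atom.subst θ C.head)

/-! ### General interpretations and logical consequence -/

structure Interp (F Pr : Type) : Type 1 where
  carrier : Type
  fnI : F → List carrier → carrier
  predI : Pr → List carrier → Prop

def Interp.evalTm (I : Interp F Pr) (v : ℕ → I.carrier) : Tm F → I.carrier
  | .var n => v n
  | .fn f ts => I.fnI f (ts.attach.map (fun t => I.evalTm v t.1))
decreasing_by
  have := List.sizeOf_lt_of_mem t.2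
  simp only [Tm.fn.sizeOf_spec]
  omega

def Interp.holdsA (I : Interp F Pr) (v : ℕ → I.carrier) (A : Atom F Pr) : Prop :=
  I.predI A.pred (A.args.map (I.evalTm v))

/-- The cut is true in every interpretation. -/
def Interp.holdsE (I : Interp F Pr) (v : ℕ → I.carrier) : EAtom F Pr → Prop
  | .cut => True
  | .atm A => I.holdsA v A

def Interp.holdsQ (I : Interp F Pr) (v : ℕ → I.carrier) (Q : Query F Pr) : Prop :=
  ∀ a ∈ Q, I.holdsE v a

def Interp.ModelsClause (I : Interp F Pr) (C : Clause F Pr) : Prop :=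
  ∀ v : ℕ → I.carrier, I.holdsQ v C.body → I.holdsA v C.head

def Interp.ModelsProg (I : Interp F Pr) (P : Prog F Pr) : Prop :=
  ∀ C ∈ P, I.ModelsClause C

/-- `P ⊨ Q` (truth of a formula is truth of its universal closure). -/
def Entails (P : Prog F Pr) (Q : Query F Pr) : Prop :=
  ∀ I : Interp F Pr, I.ModelsProg P → ∀ v : ℕ → I.carrier, I.holdsQ v Q

/-- `M` (a set of ground atoms) is a Herbrand model of `P`. -/
def HerbModels (M : Set (Atom F Pr)) (P : Prog F Pr) : Prop :=
  ∀ C ∈ P, ∀ θ : Subst F, Clause.Ground (Clause.subst θ C) →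
    (∀ A : Atom F Pr, EAtom.atm A ∈ Query.subst θ C.body → A ∈ M) →
    Atom.subst θ C.head ∈ M

/-- Removing all occurrences of the cut from a query. -/
def rmCutQ (Q : Query F Pr) : Query F Pr :=
  Q.filterMap (fun a => match a with | .cut => none | .atm A => some (.atm A))

/-- Removing all occurrences of the cut from a program. -/
def rmCutProg (P : Prog F Pr) : Prog F Pr := P.map (fun C => ⟨C.head, rmCutQ C.body⟩)

/-! ### LD-derivations -/

/-- Variables occurring in the queries `Q 0 … Q i`, the mgu's `sub 0 … sub (i-1)`
and the clause variants `cls 0 … cls (i-1)` of a derivation. -/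
def histVars (Q : ℕ → Query F Pr) (sub : ℕ → Subst F)
    (cls : ℕ → Option (Clause F Pr)) (i : ℕ) : Set ℕ :=
  {n | (∃ j ≤ i, n ∈ Query.vars (Q j)) ∨ (∃ j < i, n ∈ (sub j).varSet) ∨
       (∃ j < i, ∃ C : Clause F Pr, cls j = some C ∧ n ∈ C.vars)}

/-- One LD-resolution step (names the clause variant used, if any):
either a leading cut is deleted, or the first atom is resolved
with a clause via an idempotent relevant mgu. -/
def DStep (Q Q' : Query F Pr) (θ : Subst F) (oc : Option (Clause F Pr)) : Prop :=
  (∃ rest : Query F Pr, Q = .cut :: rest ∧ Q' = rest ∧ θ = Subst.idS ∧ oc = none) ∨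
  (∃ (A : Atom F Pr) (rest : Query F Pr) (C : Clause F Pr),
      Q = .atm A :: rest ∧ oc = some C ∧
      IsMgu θ A C.head ∧ θ.Idempotent ∧ Relevant θ A C.head ∧
      Q' = Query.subst θ (C.body ++ rest))

/-- A finite LD-derivation: queries `Q 0, …, Q len`,
mgu's `sub 0, …, sub (len-1)` and clause variants `cls 0, …, cls (len-1)`,
with clause variants standardized apart. -/
structure Deriv (F Pr : Type) : Type where
  len : ℕ
  Q : ℕ → Query F Pr
  sub : ℕ → Subst F
  cls : ℕ → Option (Clause F Pr)
  step : ∀ i < len, DStep (Q i) (Q (i+1)) (sub i) (cls i)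
  fresh : ∀ i < len, ∀ C : Clause F Pr, cls i = some C →
    Disjoint C.vars (histVars Q sub cls i)

/-- The derivation only uses (variants of) clauses of the program `P`. -/
def Deriv.FromProg (P : Prog F Pr) (D : Deriv F Pr) : Prop :=
  ∀ i < D.len, ∀ C : Clause F Pr, D.cls i = some C → ∃ C0 ∈ P, Variant C C0

def Deriv.Successful (D : Deriv F Pr) : Prop := D.Q D.len = []

/-- The computed answer `Q0 θ1 ⋯ θn` of a derivation. -/
def Deriv.answer (D : Deriv F Pr) : Query F Pr := Query.subst (compN D.sub 0 D.len) (D.Q 0)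

/-- At position `j` the query has a (protected) suffix of length `L`; the prefix
before it succeeds exactly at position `m` (the subderivation for the prefix ends there). -/
def Deriv.SuffixEndsAt (D : Deriv F Pr) (j L m : ℕ) : Prop :=
  j ≤ m ∧ m ≤ D.len ∧ (∀ i, j ≤ i → i < m → L < (D.Q i).length) ∧ (D.Q m).length = L

/-- An infinite LD-derivation. -/
structure InfLD (F Pr : Type) (P : Prog F Pr) : Type where
  Q : ℕ → Query F Pr
  sub : ℕ → Subst F
  cls : ℕ → Option (Clause F Pr)
  step : ∀ i : ℕ, DStep (Q i) (Q (i+1)) (sub i) (cls i)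
  fresh : ∀ i : ℕ, ∀ C : Clause F Pr, cls i = some C →
    Disjoint C.vars (histVars Q sub cls i)
  prog : ∀ i : ℕ, ∀ C : Clause F Pr, cls i = some C → ∃ C0 ∈ P, Variant C C0

/-- One SLD-resolution step, with an arbitrarily selected atom. -/
def SStep (Q Q' : Query F Pr) (θ : Subst F) (oc : Option (Clause F Pr)) : Prop :=
  (∃ l r : Query F Pr, Q = l ++ .cut :: r ∧ Q' = l ++ r ∧ θ = Subst.idS ∧ oc = none) ∨
  (∃ (l r : Query F Pr) (A : Atom F Pr) (C : Clause F Pr),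
      Q = l ++ .atm A :: r ∧ oc = some C ∧
      IsMgu θ A C.head ∧ θ.Idempotent ∧ Relevant θ A C.head ∧
      Q' = Query.subst θ (l ++ C.body ++ r))

/-- An infinite SLD-derivation (under an arbitrary selection rule). -/
structure InfSLD (F Pr : Type) (P : Prog F Pr) : Type where
  Q : ℕ → Query F Pr
  sub : ℕ → Subst F
  cls : ℕ → Option (Clause F Pr)
  step : ∀ i : ℕ, SStep (Q i) (Q (i+1)) (sub i) (cls i)
  fresh : ∀ i : ℕ, ∀ C : Clause F Pr, cls i = some C →
    Disjoint C.vars (histVars Q sub cls i)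
  prog : ∀ i : ℕ, ∀ C : Clause F Pr, cls i = some C → ∃ C0 ∈ P, Variant C C0

/-! ### Unrestricted LD-derivations and lifts -/

/-- One step of an unrestricted LD-derivation for program `P`. -/
def UStep (P : Prog F Pr) (Q Q' : Query F Pr) (θ : Subst F)
    (oc : Option (Clause F Pr)) : Prop :=
  (∃ rest : Query F Pr, Q = .cut :: rest ∧ Q' = rest ∧ θ = Subst.idS ∧ oc = none) ∨
  (∃ (A : Atom F Pr) (rest B : Query F Pr) (C : Clause F Pr),
      Q = .atm A :: rest ∧ oc = some C ∧ C ∈ P ∧ Subst.dom θ ⊆ Query.vars Q ∧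
      Clause.Inst ⟨Atom.subst θ A, B⟩ C ∧ Q' = B ++ Query.subst θ rest)

/-- A finite unrestricted LD-derivation for `P`. -/
structure UDeriv (F Pr : Type) (P : Prog F Pr) : Type where
  len : ℕ
  Q : ℕ → Query F Pr
  sub : ℕ → Subst F
  cls : ℕ → Option (Clause F Pr)
  step : ∀ i < len, UStep P (Q i) (Q (i+1)) (sub i) (cls i)

def UDeriv.Successful {P : Prog F Pr} (E : UDeriv F Pr P) : Prop := E.Q E.len = []

def UDeriv.answer {P : Prog F Pr} (E : UDeriv F Pr P) : Query F Pr :=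
  Query.subst (compN E.sub 0 E.len) (E.Q 0)

/-- The LD-derivation `D` is a lift of the unrestricted LD-derivation `E`. -/
def IsLift {P : Prog F Pr} (D : Deriv F Pr) (E : UDeriv F Pr P) : Prop :=
  Query.Inst (E.Q 0) (D.Q 0) ∧ D.len = E.len ∧
  (∀ i < D.len, (E.cls i = none ↔ D.cls i = none) ∧
    ∀ C C' : Clause F Pr, E.cls i = some C → D.cls i = some C' → Variant C' C)

/-! ### c-s-specifications (call-success specifications) -/

/-- `P` is c-s-correct w.r.t. `(pre, post)`: in every LD-derivation beginning with an
atomic query from `pre`, each selected atom is in `pre ∪ {!}` and each atomic computed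
answer of a successful subderivation is in `post ∪ {!}`. -/
def CsCorrect (P : Prog F Pr) (pre post : Set (Atom F Pr)) : Prop :=
  ∀ D : Deriv F Pr, D.FromProg P → (∃ A ∈ pre, D.Q 0 = [.atm A]) →
    (∀ i ≤ D.len, ∀ (a : EAtom F Pr) (rest : Query F Pr), D.Q i = a :: rest →
        a = .cut ∨ ∃ A ∈ pre, a = .atm A) ∧
    (∀ j m : ℕ, ∀ (A : Atom F Pr) (rest : Query F Pr), D.Q j = .atm A :: rest →
        D.SuffixEndsAt j rest.length m →
        Atom.subst (compN D.sub j (m - j)) A ∈ post)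

/-- The `i`-th element of `Q` (if any) is in `S ∪ {!}`. -/
def QIn (S : Set (Atom F Pr)) (Q : Query F Pr) (i : ℕ) : Prop :=
  ∀ a : EAtom F Pr, Q[i]? = some a → EAtomIn S a

/-- A clause is well-asserted w.r.t. a c-s-specification `(pre, post)`. -/
def WellAssertedClause (pre post : Set (Atom F Pr)) (C : Clause F Pr) : Prop :=
  ∀ θ : Subst F, Atom.subst θ C.head ∈ pre →
    (∀ k < C.body.length,
      (∀ i < k, QIn post (Query.subst θ C.body) i) → QIn pre (Query.subst θ C.body) k) ∧
    ((∀ i < C.body.length, QIn post (Query.subst θ C.body) i) → Atom.subst θ C.head ∈ post)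

/-- A query is well-asserted w.r.t. `(pre, post)`. -/
def WellAssertedQuery (pre post : Set (Atom F Pr)) (Q : Query F Pr) : Prop :=
  ∀ θ : Subst F, ∀ k < Q.length,
    (∀ i < k, QIn post (Query.subst θ Q) i) → QIn pre (Query.subst θ Q) k

/-! ### c-coveredness -/

/-- Ground atom `A` is c-covered w.r.t. `S` and `(pre, post)` by the clause `C`,
which is (a variant of) the `i`-th clause of `P`. -/
def CCoveredBy (P : Prog F Pr) (S pre post : Set (Atom F Pr)) (A : Atom F Pr)
    (C : Clause F Pr) (i : ℕ) : Prop :=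
  (∃ C0 : Clause F Pr, P[i]? = some C0 ∧ Variant C C0) ∧
  CoveredBy S C A ∧
  (∀ j < i, ∀ (H' : Atom F Pr) (A0 A1 : Query F Pr),
      P[j]? = some ⟨H', A0 ++ .cut :: A1⟩ → EAtom.cut ∉ A0 → H'.pred = C.head.pred →
      ∀ H'' ∈ pre, Atom.Inst A H'' →
        ∀ θ : Subst F, Atom.Ground (Atom.subst θ H'') →
          ¬ CoveredBy (HBRestrict post) ⟨H', A0⟩ (Atom.subst θ H'')) ∧
  (∀ B0 B1 : Query F Pr, C.body = B0 ++ .cut :: B1 →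
    ∀ ρ : Subst F, Subst.dom ρ ⊆ C.head.vars → (Subst.rng ρ ∩ C.vars) ⊆ C.head.vars →
      Disjoint (Subst.dom ρ) (Subst.rng ρ) →
      Atom.subst ρ C.head ∈ pre → Atom.Inst A (Atom.subst ρ C.head) →
      ∀ η : Subst F, Subst.dom η = Query.vars (Query.subst ρ B0) →
        Query.Ground (Query.subst η (Query.subst ρ B0)) →
        SpecModels post (Query.subst η (Query.subst ρ B0)) →
        CoveredBy S ⟨Atom.subst η (Atom.subst ρ C.head),
                     Query.subst η (Query.subst ρ B1)⟩ A)

/-- `A` is c-covered by some clause of `P`. -/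
def CCoveredByProg (P : Prog F Pr) (S pre post : Set (Atom F Pr)) (A : Atom F Pr) : Prop :=
  ∃ (i : ℕ) (C : Clause F Pr), P[i]? = some C ∧ CCoveredBy P S pre post A C i

/-! ### Level mappings, recurrence, acceptability -/

/-- Extension of a level mapping to extended atoms, with `|!| = 0`. -/
def eLvl (lvl : Atom F Pr → ℕ) : EAtom F Pr → ℕ
  | .cut => 0
  | .atm A => lvl A

/-- `P` is recurrent w.r.t. the level mapping `lvl`. -/
def Recurrent (P : Prog F Pr) (lvl : Atom F Pr → ℕ) : Prop :=
  ∀ C ∈ P, ∀ θ : Subst F, Clause.Ground (Clause.subst θ C) →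
    ∀ a ∈ Query.subst θ C.body, eLvl lvl a < lvl (Atom.subst θ C.head)

/-- `P` is acceptable w.r.t. the specification `S` and the level mapping `lvl`. -/
def Acceptable (P : Prog F Pr) (S : Set (Atom F Pr)) (lvl : Atom F Pr → ℕ) : Prop :=
  (∀ A : Atom F Pr, MP P A → A ∈ S) ∧
  (∀ C ∈ P, ∀ θ : Subst F, Clause.Ground (Clause.subst θ C) →
    ∀ i < C.body.length, (∀ j < i, QIn S (Query.subst θ C.body) j) →
      ∀ a : EAtom F Pr, (Query.subst θ C.body)[i]? = some a →
        eLvl lvl a < lvl (Atom.subst θ C.head))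

/-- A query is bounded w.r.t. a level mapping. -/
def BoundedQuery (lvl : Atom F Pr → ℕ) (Q : Query F Pr) : Prop :=
  ∃ k : ℕ, ∀ a ∈ Q, ∀ θ : Subst F, EAtom.Ground (EAtom.subst θ a) →
    eLvl lvl (EAtom.subst θ a) < k

/-! ### Completeness notions -/

/-- `P` is complete for the query `Q` w.r.t. `S`. -/
def CompleteFor (P : Prog F Pr) (S : Set (Atom F Pr)) (Q : Query F Pr) : Prop :=
  ∀ θ : Subst F, Query.Ground (Query.subst θ Q) → SpecModels S (Query.subst θ Q) →
    ∀ A : Atom F Pr, EAtom.atm A ∈ Query.subst θ Q → MP P A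

end LP

namespace LP

variable {F Pr : Type}

/-! ### LD-trees and SLD-trees -/

/-- A clause is applicable to an atom if (a variant of) its head unifies with it. -/
def Applicable (A : Atom F Pr) (C0 : Clause F Pr) : Prop :=
  ∃ (C : Clause F Pr) (θ : Subst F), Variant C C0 ∧ Atom.subst θ A = Atom.subst θ C.head

open Classical in
/-- The clauses of `P` applicable to `A`, in program order. -/
noncomputable def applicables (P : Prog F Pr) (A : Atom F Pr) : Prog F Pr :=
  P.filter (fun C0 => decide (Applicable A C0))

/-- Variables occurring in the labels, mgu's and clause variants along the path
from the root to `p` (inclusive). -/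
def pathVarsAux (label : List ℕ → Query F Pr) (esub : List ℕ → Subst F)
    (ecls : List ℕ → Option (Clause F Pr)) (p : List ℕ) : Set ℕ :=
  {n | ∃ q : List ℕ, q <+: p ∧
        (n ∈ Query.vars (label q) ∨ n ∈ (esub q).varSet ∨
         ∃ C : Clause F Pr, ecls q = some C ∧ n ∈ C.vars)}

/-- The LD-tree for a program `P` and an initial query `Q0`.  Nodes are coded by
lists of child indices (the root is `[]`); `label` gives the query at a node,
`esub` and `ecls` the mgu and the clause variant of the edge into a node. -/
structure LDTree (F Pr : Type) (P : Prog F Pr) (Q0 : Query F Pr) : Type where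
  dom : Set (List ℕ)
  label : List ℕ → Query F Pr
  esub : List ℕ → Subst F
  ecls : List ℕ → Option (Clause F Pr)
  root_mem : [] ∈ dom
  root_label : label [] = Q0
  root_esub : esub [] = Subst.idS
  root_ecls : ecls [] = none
  prefix_closed : ∀ p q : List ℕ, p <+: q → q ∈ dom → p ∈ dom
  sibling_closed : ∀ (p : List ℕ) (k k' : ℕ), k' ≤ k → p ++ [k] ∈ dom → p ++ [k'] ∈ dom
  empty_leaf : ∀ p ∈ dom, label p = [] → ∀ k : ℕ, p ++ [k] ∉ dom
  cut_step : ∀ p ∈ dom, ∀ rest : Query F Pr, label p = .cut :: rest →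
    (p ++ [0] ∈ dom ∧ label (p ++ [0]) = rest ∧ esub (p ++ [0]) = Subst.idS ∧
     ecls (p ++ [0]) = none ∧ ∀ k : ℕ, k ≠ 0 → p ++ [k] ∉ dom)
  atom_children_mem : ∀ p ∈ dom, ∀ (A : Atom F Pr) (rest : Query F Pr),
    label p = .atm A :: rest →
    ∀ k : ℕ, (p ++ [k] ∈ dom ↔ k < (applicables P A).length)
  atom_step : ∀ p ∈ dom, ∀ (A : Atom F Pr) (rest : Query F Pr),
    label p = .atm A :: rest → ∀ k : ℕ, p ++ [k] ∈ dom →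
      ∃ C C0 : Clause F Pr, (applicables P A)[k]? = some C0 ∧
        ecls (p ++ [k]) = some C ∧ Variant C C0 ∧
        IsMgu (esub (p ++ [k])) A C.head ∧ (esub (p ++ [k])).Idempotent ∧
        Relevant (esub (p ++ [k])) A C.head ∧
        label (p ++ [k]) = Query.subst (esub (p ++ [k])) (C.body ++ rest) ∧
        Disjoint C.vars (pathVarsAux label esub ecls p)

/-- An SLD-tree for `P` and `Q0`, under the selection rule `sel`
(`sel p` is the position of the selected atom of the query at node `p`). -/
structure SLDTree (F Pr : Type) (P : Prog F Pr) (Q0 : Query F Pr) : Type where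
  dom : Set (List ℕ)
  label : List ℕ → Query F Pr
  sel : List ℕ → ℕ
  esub : List ℕ → Subst F
  ecls : List ℕ → Option (Clause F Pr)
  root_mem : [] ∈ dom
  root_label : label [] = Q0
  root_esub : esub [] = Subst.idS
  root_ecls : ecls [] = none
  prefix_closed : ∀ p q : List ℕ, p <+: q → q ∈ dom → p ∈ dom
  sibling_closed : ∀ (p : List ℕ) (k k' : ℕ), k' ≤ k → p ++ [k] ∈ dom → p ++ [k'] ∈ dom
  empty_leaf : ∀ p ∈ dom, label p = [] → ∀ k : ℕ, p ++ [k] ∉ dom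
  sel_lt : ∀ p ∈ dom, label p ≠ [] → sel p < (label p).length
  cut_step : ∀ p ∈ dom, ∀ l r : Query F Pr, label p = l ++ .cut :: r → sel p = l.length →
    (p ++ [0] ∈ dom ∧ label (p ++ [0]) = l ++ r ∧ esub (p ++ [0]) = Subst.idS ∧
     ecls (p ++ [0]) = none ∧ ∀ k : ℕ, k ≠ 0 → p ++ [k] ∉ dom)
  atom_children_mem : ∀ p ∈ dom, ∀ (l : Query F Pr) (A : Atom F Pr) (r : Query F Pr),
    label p = l ++ .atm A :: r → sel p = l.length →
    ∀ k : ℕ, (p ++ [k] ∈ dom ↔ k < (applicables P A).length)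
  atom_step : ∀ p ∈ dom, ∀ (l : Query F Pr) (A : Atom F Pr) (r : Query F Pr),
    label p = l ++ .atm A :: r → sel p = l.length → ∀ k : ℕ, p ++ [k] ∈ dom →
      ∃ C C0 : Clause F Pr, (applicables P A)[k]? = some C0 ∧
        ecls (p ++ [k]) = some C ∧ Variant C C0 ∧
        IsMgu (esub (p ++ [k])) A C.head ∧ (esub (p ++ [k])).Idempotent ∧
        Relevant (esub (p ++ [k])) A C.head ∧
        label (p ++ [k]) = Query.subst (esub (p ++ [k])) (l ++ C.body ++ r) ∧
        Disjoint C.vars (pathVarsAux label esub ecls p)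

/-- `P` is semi-complete w.r.t. `S`: complete for every query possessing a finite SLD-tree. -/
def SemiComplete (P : Prog F Pr) (S : Set (Atom F Pr)) : Prop :=
  ∀ Q : Query F Pr, (∃ T : SLDTree F Pr P Q, T.dom.Finite) → CompleteFor P S Q

/-! ### The preorder sequence `seq(T)` and pruning -/

/-- The subtree of `S` rooted at `q` is finite. -/
def SubtreeFin (S : Set (List ℕ)) (q : List ℕ) : Prop := {x ∈ S | q <+: x}.Finite

/-- Node `p` occurs in the preorder sequence `seq` of the subgraph `S`:
all subtrees to the left of the path to `p` are finite. -/
def InSeq (S : Set (List ℕ)) (p : List ℕ) : Prop :=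
  p ∈ S ∧ ∀ (q : List ℕ) (k k' : ℕ), (q ++ [k]) <+: p → k' < k → SubtreeFin S (q ++ [k'])

/-- `p` strictly precedes `q` in the preorder ordering of tree nodes. -/
def PreLt (p q : List ℕ) : Prop :=
  (p <+: q ∧ p ≠ q) ∨
  ∃ (r : List ℕ) (a b : ℕ), a < b ∧ (r ++ [a]) <+: p ∧ (r ++ [b]) <+: q

variable {P : Prog F Pr} {Q0 : Query F Pr}

/-- An executing node: a node whose query starts with the cut. -/
def LDTree.ExecNode (T : LDTree F Pr P Q0) (e : List ℕ) : Prop :=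
  ∃ rest : Query F Pr, T.label e = .cut :: rest

/-- `s` is the first node `Q_j` of the cutting sequence of the executing node `e`:
the protected suffix of length `|label e|` persists from `s` to `e`,
and `s` is the shallowest such node. -/
def LDTree.CutStart (T : LDTree F Pr P Q0) (e s : List ℕ) : Prop :=
  s <+: e ∧
  (∀ q : List ℕ, s <+: q → q <+: e → q ≠ e → (T.label e).length < (T.label q).length) ∧
  (s = [] ∨ ∃ (p : List ℕ) (k : ℕ), s = p ++ [k] ∧
      ¬ ((T.label e).length < (T.label p).length))

/-- The introducing node of a cutting sequence starting at `s`
(for a cut of the initial query it is the root itself). -/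
def cutIntro (s : List ℕ) : List ℕ := if s = [] then [] else s.dropLast

/-- `x` is pruned by (the cutting sequence of) the executing node `e`:
`x` lies in a subtree rooted at a child, to the right of the cutting sequence,
of a node of the cutting sequence. -/
def LDTree.PrunedByExec (T : LDTree F Pr P Q0) (e x : List ℕ) : Prop :=
  T.ExecNode e ∧ ∃ s : List ℕ, T.CutStart e s ∧
    ∃ (q : List ℕ) (k k' : ℕ), cutIntro s <+: q ∧ (q ++ [k]) <+: e ∧ k < k' ∧
      (q ++ [k']) <+: x

/-- `e` is the (n+1)-st executing node in the preorder sequence of the subgraph `S`. -/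
def LDTree.IsNthExec (T : LDTree F Pr P Q0) (S : Set (List ℕ)) (n : ℕ) (e : List ℕ) : Prop :=
  e ∈ S ∧ T.ExecNode e ∧ InSeq S e ∧
  {e' : List ℕ | e' ∈ S ∧ T.ExecNode e' ∧ InSeq S e' ∧ PreLt e' e}.Finite ∧
  {e' : List ℕ | e' ∈ S ∧ T.ExecNode e' ∧ InSeq S e' ∧ PreLt e' e}.ncard = n

/-- The sequence of trees `T_0, T_1, …` of the definition of the pruned LD-tree. -/
def LDTree.stage (T : LDTree F Pr P Q0) : ℕ → Set (List ℕ)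
  | 0 => T.dom
  | n+1 => T.stage n \
      {x : List ℕ | ∃ e : List ℕ, T.IsNthExec (T.stage n) n e ∧ T.PrunedByExec e x}

/-- The pruned LD-tree `pruned(T)`: the nodes surviving all stages
and occurring in the preorder sequence of the resulting subgraph. -/
def LDTree.prunedDom (T : LDTree F Pr P Q0) : Set (List ℕ) :=
  {p ∈ ⋂ n : ℕ, T.stage n | InSeq (⋂ n : ℕ, T.stage n) p}

/-- Composition of the mgu's along a path (auxiliary, from node `q` down `rest`). -/
def LDTree.branchSubstAux (T : LDTree F Pr P Q0) : List ℕ → List ℕ → Subst F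
  | _, [] => Subst.idS
  | q, k :: rest => Subst.comp (T.esub (q ++ [k])) (T.branchSubstAux (q ++ [k]) rest)

/-- Composition of the mgu's along the branch from the root to `p`. -/
def LDTree.branchSubst (T : LDTree F Pr P Q0) (p : List ℕ) : Subst F :=
  T.branchSubstAux [] p

/-- The node `p` occurs in a cutting sequence of the subgraph `S` of `T`
only as its introducing node. -/
def LDTree.OnlyIntro (T : LDTree F Pr P Q0) (S : Set (List ℕ)) (p : List ℕ) : Prop :=
  ∀ e s : List ℕ, e ∈ S → T.ExecNode e → T.CutStart e s →
    (∀ q : List ℕ, cutIntro s <+: q → q <+: e → q ∈ S) →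
    cutIntro s <+: p → p <+: e → (s ≠ [] ∧ p = cutIntro s)

end LP

namespace LP

theorem Tm.mem_vars_fn {F : Type} {f : F} {ts : List (Tm F)} {x : ℕ} :
    x ∈ (Tm.fn f ts).vars ↔ ∃ t ∈ ts, x ∈ t.vars := by
  simp [Tm.vars, Tm.varsL]

theorem Tm.notMem_vars_subst {F : Type} {θ : Subst F} {x : ℕ} (hθ : x ∉ θ.varSet) :
    ∀ t : Tm F, x ∉ t.vars → x ∉ (t.subst θ).vars
  | .var n, ht => by
    rw [Tm.subst]
    by_cases h : θ n = .var n
    · rwa [h]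
    · exact fun hx => hθ (Or.inr ⟨n, h, hx⟩)
  | .fn f ts, ht => by
    rw [Tm.subst, Tm.mem_vars_fn]
    rintro ⟨s, hs, hx⟩
    obtain ⟨⟨t, htm⟩, -, rfl⟩ := List.mem_map.1 hs
    have := List.sizeOf_lt_of_mem htm
    exact Tm.notMem_vars_subst hθ t (fun h => ht (Tm.mem_vars_fn.2 ⟨t, htm, h⟩)) hx
termination_by t => sizeOf t
decreasing_by
  simp only [Tm.fn.sizeOf_spec]
  omega

theorem EAtom.notMem_vars_subst {F Pr : Type} {θ : Subst F} {x : ℕ} (hθ : x ∉ θ.varSet) :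
    ∀ a : EAtom F Pr, x ∉ a.vars → x ∉ (a.subst θ).vars
  | .cut, ha => ha
  | .atm A, ha => by
    rintro ⟨s, hs, hx⟩
    obtain ⟨t, ht, rfl⟩ := List.mem_map.1 hs
    exact Tm.notMem_vars_subst hθ t (fun h => ha ⟨t, ht, h⟩) hx

theorem Query.notMem_vars_subst {F Pr : Type} {θ : Subst F} {x : ℕ} (hθ : x ∉ θ.varSet)
    {Q : Query F Pr} (hQ : x ∉ Query.vars Q) : x ∉ Query.vars (Query.subst θ Q) := by
  rintro ⟨s, hs, hx⟩
  obtain ⟨a, ha, rfl⟩ := List.mem_map.1 hs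
  exact EAtom.notMem_vars_subst hθ a (fun h => hQ ⟨a, ha, h⟩) hx

theorem histVars_mono {F Pr : Type} (Q : ℕ → Query F Pr) (sub : ℕ → Subst F)
    (cls : ℕ → Option (Clause F Pr)) {i k : ℕ} (h : i ≤ k) :
    histVars Q sub cls i ⊆ histVars Q sub cls k := by
  rintro x (⟨j, hj, hx⟩ | ⟨j, hj, hx⟩ | ⟨j, hj, hx⟩)
  · exact Or.inl ⟨j, hj.trans h, hx⟩
  · exact Or.inr (Or.inl ⟨j, hj.trans_le h, hx⟩)
  · exact Or.inr (Or.inr ⟨j, hj.trans_le h, hx⟩)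

/-- One step of the argument: if the prefix of `Q` before its last `L` atoms is nonempty, and `X`
occurs neither in that prefix nor in the clause variant used, then `X` occurs neither in the mgu
nor in the prefix of the next query, which still has a suffix of length `L`. -/
theorem DStep.notMem_prefix {F Pr : Type} {Q Q' : Query F Pr} {θ : Subst F}
    {oc : Option (Clause F Pr)} (h : DStep Q Q' θ oc) {L X : ℕ} (hL : L < Q.length)
    (hC : ∀ C, oc = some C → X ∉ C.vars)
    (hX : X ∉ Query.vars (Q.take (Q.length - L))) :
    X ∉ θ.varSet ∧ L ≤ Q'.length ∧ X ∉ Query.vars (Q'.take (Q'.length - L)) := by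
  rcases h with ⟨rest, rfl, rfl, rfl, -⟩ | ⟨A, rest, C, rfl, rfl, -, -, hrel, rfl⟩
  · rw [List.length_cons] at hL hX
    refine ⟨?_, by omega, ?_⟩
    · rintro (h | ⟨n, h, -⟩) <;> exact h rfl
    · rw [show Q'.length + 1 - L = (Q'.length - L) + 1 by omega, List.take_succ_cons] at hX
      rintro ⟨a, ha, hx⟩
      exact hX ⟨a, List.mem_cons_of_mem _ ha, hx⟩
  · have hC := hC C rfl
    rw [List.length_cons] at hL hX
    rw [show rest.length + 1 - L = (rest.length - L) + 1 by omega, List.take_succ_cons] at hX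
    have hθ : X ∉ θ.varSet := fun hx => by
      rcases hrel hx with h | h
      · exact hX ⟨_, List.mem_cons_self, h⟩
      · exact hC (Or.inl h)
    have hlen : (Query.subst θ (C.body ++ rest)).length = C.body.length + rest.length := by
      simp [Query.subst]
    refine ⟨hθ, by omega, ?_⟩
    -- The new prefix is the instance of the clause body followed by the rest of the old prefix.
    have htake : (Query.subst θ (C.body ++ rest)).take (C.body.length + rest.length - L)
        = Query.subst θ (C.body ++ rest.take (rest.length - L)) := by
      rw [show C.body.length + rest.length - L = C.body.length + (rest.length - L) by omega,
        Query.subst, ← List.map_take, List.take_length_add_append, Query.subst]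
    rw [hlen, htake]
    refine Query.notMem_vars_subst hθ ?_
    rintro ⟨a, ha, hx⟩
    rcases List.mem_append.1 ha with ha | ha
    · exact hC (Or.inr ⟨a, ha, hx⟩)
    · exact hX ⟨a, List.mem_cons_of_mem _ ha, hx⟩

/-- **Lemma 1 of the paper.**  Let `D` be an LD-derivation for `P` and `Q_j = B⃗ ++ A⃗`
a query of `D`.  If a variable `X` occurs in `Q_0,…,Q_j`, in `θ_1,…,θ_j`, or in a
clause variant used to derive some of `Q_1,…,Q_j`, but does not occur in `B⃗`, then
`X` occurs in no mgu of the subderivation of `D` for `B⃗`, nor in the prefix `B⃗_i`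
of any query `Q_i = B⃗_i ++ A⃗θ_{j+1}⋯θ_i` of that subderivation (for `i > j`). -/
theorem subderivation_variable {F Pr : Type} (P : Prog F Pr)
    (D : Deriv F Pr) (hP : D.FromProg P)
    (j : ℕ) (hj : j ≤ D.len) (Bv Av : Query F Pr) (hsplit : D.Q j = Bv ++ Av)
    (X : ℕ) (hX : X ∈ histVars D.Q D.sub D.cls j) (hXB : X ∉ Query.vars Bv) :
    (∀ i : ℕ, j ≤ i → i < D.len →
        (∀ i' : ℕ, j ≤ i' → i' ≤ i → Av.length < (D.Q i').length) →
        X ∉ (D.sub i).varSet) ∧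
    (∀ i : ℕ, j < i → i ≤ D.len →
        (∀ i' : ℕ, j ≤ i' → i' < i → Av.length < (D.Q i').length) →
        X ∉ Query.vars ((D.Q i).take ((D.Q i).length - Av.length))) := by
  have hcls : ∀ i, j ≤ i → i < D.len → ∀ C, D.cls i = some C → X ∉ C.vars :=
    fun i hji hi C hC hXC =>
      Set.disjoint_left.1 (D.fresh i hi C hC) hXC (histVars_mono _ _ _ hji hX)
  have key : ∀ i, j ≤ i → i ≤ D.len →
      (∀ i', j ≤ i' → i' < i → Av.length < (D.Q i').length) →
      X ∉ Query.vars ((D.Q i).take ((D.Q i).length - Av.length)) := by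
    intro i hji
    induction i, hji using Nat.le_induction with
    | base =>
      intro _ _
      simpa [hsplit] using hXB
    | succ i hji ih =>
      intro hi hlong
      exact ((D.step i hi).notMem_prefix (hlong i hji i.lt_succ_self) (hcls i hji hi)
        (ih (by omega) fun i' h h' => hlong i' h (by omega))).2.2
  refine ⟨fun i hji hi hlong => ?_, fun i hji hi hlong => key i hji.le hi hlong⟩
  exact ((D.step i hi).notMem_prefix (hlong i hji le_rfl) (hcls i hji hi)
    (key i hji hi.le fun i' h h' => hlong i' h h'.le)).1

end LP
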